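/- For all real a,b,c,d with 0 < a, 0 < b, 0 < c, 0 < d and a − b − c − d > 0: ∑_{n=0}^∞ (a/2+1)ₙ(a)ₙ(b)ₙ(c)ₙ(d)ₙ/((a/2)ₙ(a−b+1)ₙ(a−c+1)ₙ(a−d+1)ₙ n!) = Γ(a−b+1)Γ(a−c+1)Γ(a−d+1)Γ(a−b−c−d+1)/(Γ(a+1)Γ(a−b−c+1)Γ(a−b−d+1)Γ(a−c−d+1)). -/

import Mathlib

noncomputable def poch (a : ℝ) (n : ℕ) : ℝ := ∏ i ∈ Finset.range n, (a + i)

/-!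
Write `S a` for the sum and `R a` for the claimed value, with `b`, `c`, `d` fixed. A telescoping
certificate shows that `S` satisfies the first-order recurrence in `a` that the functional equation
of the Gamma function gives for `R`, so that `S a * R (a + N) = R a * S (a + N)` for all `N`.
As `N → ∞`, both `S (a + N)` and `R (a + N)` tend to `1`: the former by dominated convergence,
because only the term `n = 0` survives, the latter because `Γ (x + N) ~ N! * N ^ (x - 1)`.
-/

open Filter Topology Asymptotics Real

/-! ### The Pochhammer symbol -/

lemma poch_zero (x : ℝ) : poch x 0 = 1 :=
  Finset.prod_range_zero _

lemma poch_succ (x : ℝ) (n : ℕ) : poch x (n + 1) = poch x n * (x + n) :=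
  Finset.prod_range_succ _ _

lemma poch_pos {x : ℝ} (hx : 0 < x) (n : ℕ) : 0 < poch x n :=
  Finset.prod_pos fun _ _ => by positivity

lemma ne_neg_natCast_of_pos {x : ℝ} (hx : 0 < x) (m : ℕ) : x ≠ -m :=
  ((neg_nonpos.2 m.cast_nonneg).trans_lt hx).ne'

lemma add_natCast_ne_zero {x : ℝ} (hx : ∀ m : ℕ, x ≠ -m) (n : ℕ) : x + n ≠ 0 :=
  fun h => hx n (eq_neg_of_add_eq_zero_left h)

lemma poch_ne_zero {x : ℝ} (hx : ∀ m : ℕ, x ≠ -m) (n : ℕ) : poch x n ≠ 0 :=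
  Finset.prod_ne_zero_iff.2 fun i _ => add_natCast_ne_zero hx i

lemma poch_neg_natCast_eq_zero {m n : ℕ} (h : m < n) : poch (-m) n = 0 :=
  Finset.prod_eq_zero (Finset.mem_range.2 h) (neg_add_cancel _)

lemma poch_add_one {x : ℝ} (hx : x ≠ 0) (n : ℕ) : poch (x + 1) n = poch x n * ((x + n) / x) := by
  induction n with
  | zero => simp [poch_zero, hx]
  | succ n ih =>
    rw [poch_succ, poch_succ, ih]
    push_cast
    field_simp
    ring

lemma abs_poch_le_poch_abs_add_one (x : ℝ) (n : ℕ) : |poch x n| ≤ poch (|x| + 1) n := by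
  rw [poch, Finset.abs_prod]
  refine Finset.prod_le_prod (fun _ _ => abs_nonneg _) fun i _ => ?_
  calc |x + i| ≤ |x| + |(i : ℝ)| := abs_add_le _ _
    _ ≤ |x| + 1 + i := by rw [Nat.abs_cast]; linarith

lemma poch_le_poch {x y : ℝ} (hx : 0 ≤ x) (h : x ≤ y) (n : ℕ) : poch x n ≤ poch y n :=
  Finset.prod_le_prod (fun _ _ => by positivity) fun _ _ => by gcongr

lemma poch_div_poch_sub_add_one_le {x y β : ℝ} (hβ : |β| < x) (hxy : x ≤ y) (n : ℕ) :
    poch y n / poch (y - β + 1) n ≤ poch x n / poch (x - |β|) n := by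
  simp only [poch, ← Finset.prod_div_distrib]
  have hx : 0 < x := (abs_nonneg β).trans_lt hβ
  have hy : 0 < y := hx.trans_le hxy
  have : 0 < x - |β| := sub_pos.2 hβ
  have : 0 < y - β + 1 := by linarith [le_abs_self β]
  refine Finset.prod_le_prod (fun i _ => by positivity) fun i _ => ?_
  rw [div_le_div_iff₀ (by positivity) (by positivity)]
  have hmono : |β| * (x + i) ≤ |β| * (y + i) := by gcongr
  have habs : β * (x + i) ≤ |β| * (x + i) := by gcongr; exact le_abs_self β
  have : 0 ≤ x + i := by positivity
  linarith

lemma abs_poch_div_poch_sub_add_one_le {x y β : ℝ} (hβ : |β| < x) (hxy : x ≤ y) (n : ℕ) :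
    |poch β n| / poch (y - β + 1) n ≤ poch (|β| + 1) n / poch (x - |β|) n := by
  have hden : 0 < x - |β| := sub_pos.2 hβ
  exact div_le_div₀ (poch_pos (by positivity) n).le (abs_poch_le_poch_abs_add_one β n)
    (poch_pos hden n) (poch_le_poch hden.le (by linarith [le_abs_self β]) n)

lemma Gamma_add_natCast {x : ℝ} (hx : ∀ m : ℕ, x ≠ -m) (n : ℕ) :
    Gamma (x + n) = Gamma x * poch x n := by
  induction n with
  | zero => simp [poch_zero]
  | succ n ih =>
    rw [Nat.cast_succ, ← add_assoc, Gamma_add_one (add_natCast_ne_zero hx n), ih, poch_succ]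
    ring

lemma GammaSeq_eq_div_poch (x : ℝ) (n : ℕ) :
    GammaSeq x n = (n : ℝ) ^ x * n.factorial / (poch x n * (x + n)) := by
  rw [← poch_succ]
  rfl

lemma poch_isEquivalent (x : ℝ) :
    poch x ~[atTop] fun n : ℕ => (Gamma x)⁻¹ * (n.factorial * (n : ℝ) ^ (x - 1)) := by
  by_cases hx : ∃ m : ℕ, x = -m
  · obtain ⟨m, rfl⟩ := hx
    refine EventuallyEq.isEquivalent ?_
    filter_upwards [eventually_gt_atTop m] with n hn
    simp [poch_neg_natCast_eq_zero hn, Gamma_neg_nat_eq_zero]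
  push Not at hx
  have hΓ : Gamma x ≠ 0 := Gamma_ne_zero hx
  have hlim : Tendsto (fun n : ℕ => Gamma x * (GammaSeq x n)⁻¹ * (n / (n + x))) atTop (𝓝 1) := by
    simpa [hΓ] using (((GammaSeq_tendsto_Gamma x).inv₀ hΓ).const_mul (Gamma x)).mul
      (tendsto_natCast_div_add_atTop x)
  refine isEquivalent_of_tendsto_one (hlim.congr' ?_)
  filter_upwards [eventually_gt_atTop 0] with n hn
  have hn' : (n : ℝ) ≠ 0 := by positivity
  have hpow : (n : ℝ) ^ x ≠ 0 := by positivity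
  have hpoch : poch x n ≠ 0 := poch_ne_zero hx n
  have hadd : x + n ≠ 0 := add_natCast_ne_zero hx n
  rw [GammaSeq_eq_div_poch, add_comm (n : ℝ), Pi.div_apply, rpow_sub_one hn']
  field_simp

lemma poch_isBigO (x : ℝ) :
    poch x =O[atTop] fun n : ℕ => n.factorial * (n : ℝ) ^ (x - 1) :=
  (poch_isEquivalent x).isBigO.trans (isBigO_const_mul_self _ _ _)

lemma inv_poch_isBigO (x : ℝ) :
    (fun n => (poch x n)⁻¹) =O[atTop] fun n : ℕ => (n.factorial * (n : ℝ) ^ (x - 1))⁻¹ := by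
  refine (poch_isEquivalent x).inv.isBigO.trans ?_
  simp only [Pi.inv_def, mul_inv ((Gamma x)⁻¹)]
  exact isBigO_const_mul_self _ _ _

-- At `x = 0` both sides are `0`, since `Gamma 0 = 0`.
lemma Gamma_eq_Gamma_add_one_div (x : ℝ) : Gamma x = Gamma (x + 1) / x := by
  rcases eq_or_ne x 0 with rfl | hx
  · simp
  · rw [Gamma_add_one hx, mul_div_cancel_left₀ _ hx]

lemma Gamma_add_natCast_isEquivalent_of_forall_ne {x : ℝ} (hx : ∀ m : ℕ, x ≠ -m) :
    (fun n : ℕ => Gamma (x + n)) ~[atTop] fun n : ℕ => n.factorial * (n : ℝ) ^ (x - 1) := by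
  refine ((IsEquivalent.refl (u := fun _ => Gamma x)).mul (poch_isEquivalent x)).congr_left
    (Eventually.of_forall fun n => (Gamma_add_natCast hx n).symm) |>.congr_right
    (Eventually.of_forall fun n => ?_)
  simp [mul_inv_cancel_left₀ (Gamma_ne_zero hx)]

lemma add_natCast_isEquivalent (x : ℝ) :
    (fun n : ℕ => x + n) ~[atTop] fun n : ℕ => (n : ℝ) :=
  ((isLittleO_const_id_atTop x).comp_tendsto tendsto_natCast_atTop_atTop).add_isEquivalent
    IsEquivalent.refl

lemma Gamma_add_natCast_isEquivalent (x : ℝ) :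
    (fun n : ℕ => Gamma (x + n)) ~[atTop] fun n : ℕ => n.factorial * (n : ℝ) ^ (x - 1) := by
  obtain ⟨M, hM⟩ := exists_nat_gt (-x)
  induction M generalizing x with
  | zero =>
    have hx : 0 < x := by simpa using hM
    exact Gamma_add_natCast_isEquivalent_of_forall_ne (ne_neg_natCast_of_pos hx)
  | succ M ih =>
    have hshift := ih (x + 1) (by push_cast at hM; linarith)
    refine ((hshift.div (add_natCast_isEquivalent x)).congr_left
      (Eventually.of_forall fun n => ?_)).congr_right ?_
    · rw [Pi.div_apply, Gamma_eq_Gamma_add_one_div (x + n), add_right_comm]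
    · filter_upwards [eventually_gt_atTop 0] with n hn
      rw [Pi.div_apply, add_sub_cancel_right, rpow_sub_one (by positivity), mul_div_assoc]

/-! ### The summand -/

/-- The summand `(a)ₙ(b)ₙ(c)ₙ(d)ₙ / ((a-b+1)ₙ(a-c+1)ₙ(a-d+1)ₙ n!)` of the well-poised `₄F₃(1)`
series. -/
noncomputable def wellPoisedTerm (a b c d : ℝ) (n : ℕ) : ℝ :=
  poch a n * poch b n * poch c n * poch d n
    / (poch (a - b + 1) n * poch (a - c + 1) n * poch (a - d + 1) n * n.factorial)

/-- The summand of the very-well-poised `₅F₄(1)` series, with the quotient `(a/2+1)ₙ / (a/2)ₙ`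
reduced to `(a + 2n) / a`. -/
noncomputable def veryWellPoisedTerm (a b c d : ℝ) (n : ℕ) : ℝ :=
  (a + 2 * n) / a * wellPoisedTerm a b c d n

lemma veryWellPoisedTerm_eq_poch {a : ℝ} (ha : ∀ m : ℕ, a ≠ -m) (b c d : ℝ) (n : ℕ) :
    veryWellPoisedTerm a b c d n =
      poch (a / 2 + 1) n * poch a n * poch b n * poch c n * poch d n
        / (poch (a / 2) n * poch (a - b + 1) n * poch (a - c + 1) n * poch (a - d + 1) n
          * n.factorial) := by
  have ha₂ : ∀ m : ℕ, a / 2 ≠ -m := fun m h => ha (2 * m) (by push_cast; linarith)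
  have hpoch : poch (a / 2) n ≠ 0 := poch_ne_zero ha₂ n
  have ha₀ : a ≠ 0 := by simpa using ha 0
  have hquot : poch (a / 2 + 1) n = poch (a / 2) n * ((a + 2 * n) / a) := by
    rw [poch_add_one (by simpa using ha₀)]
    field_simp
  rw [hquot, veryWellPoisedTerm, wellPoisedTerm, ← mul_div_assoc, ← mul_div_mul_left _ _ hpoch]
  congr 1 <;> ring

lemma wellPoisedTerm_zero (a b c d : ℝ) : wellPoisedTerm a b c d 0 = 1 := by
  simp [wellPoisedTerm, poch_zero]

lemma wellPoisedTerm_succ (a b c d : ℝ) (n : ℕ) :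
    wellPoisedTerm a b c d (n + 1) = wellPoisedTerm a b c d n *
      ((a + n) * (b + n) * (c + n) * (d + n)
        / ((a - b + 1 + n) * (a - c + 1 + n) * (a - d + 1 + n) * (n + 1))) := by
  simp only [wellPoisedTerm, poch_succ, Nat.factorial_succ, Nat.cast_mul, Nat.cast_succ]
  rw [div_mul_div_comm]
  congr 1 <;> ring

lemma wellPoisedTerm_add_one {a b c d : ℝ} (ha : a ≠ 0) (hb : a - b + 1 ≠ 0) (hc : a - c + 1 ≠ 0)
    (hd : a - d + 1 ≠ 0) (n : ℕ) :
    wellPoisedTerm (a + 1) b c d n = wellPoisedTerm a b c d n *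
      ((a + n) * (a - b + 1) * (a - c + 1) * (a - d + 1)
        / (a * (a - b + 1 + n) * (a - c + 1 + n) * (a - d + 1 + n))) := by
  simp only [wellPoisedTerm, add_sub_right_comm]
  rw [poch_add_one ha, poch_add_one hb, poch_add_one hc, poch_add_one hd]
  simp only [div_eq_mul_inv, mul_inv, inv_inv]
  ring

/-! ### Convergence -/

lemma wellPoisedTerm_isBigO (a b c d : ℝ) :
    wellPoisedTerm a b c d =O[atTop] fun n : ℕ => (n : ℝ) ^ (-(2 * (a - b - c - d) + 4)) := by
  have hnum := (((poch_isBigO a).mul (poch_isBigO b)).mul (poch_isBigO c)).mul (poch_isBigO d)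
  have hden := (((inv_poch_isBigO (a - b + 1)).mul (inv_poch_isBigO (a - c + 1))).mul
    (inv_poch_isBigO (a - d + 1))).mul
      (isBigO_refl (fun n : ℕ => (n.factorial : ℝ)⁻¹) atTop)
  refine (hnum.mul hden).congr' (Eventually.of_forall fun n => ?_) ?_
  · simp only [wellPoisedTerm, div_eq_mul_inv, mul_inv]
  filter_upwards [eventually_gt_atTop 0] with n hn
  have hn' : (0 : ℝ) < n := by positivity
  have hfac : (n.factorial : ℝ) ≠ 0 := by positivity
  have hpow : (n : ℝ) ^ (-(2 * (a - b - c - d) + 4)) =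
      (n : ℝ) ^ (a - 1) * (n : ℝ) ^ (b - 1) * (n : ℝ) ^ (c - 1) * (n : ℝ) ^ (d - 1)
        / ((n : ℝ) ^ (a - b + 1 - 1) * (n : ℝ) ^ (a - c + 1 - 1) * (n : ℝ) ^ (a - d + 1 - 1)) := by
    simp only [← rpow_add hn', ← rpow_sub hn']
    congr 1
    ring
  rw [hpow]
  field_simp

lemma add_mul_natCast_isBigO (u v : ℝ) :
    (fun n : ℕ => u + v * n) =O[atTop] fun n : ℕ => (n : ℝ) :=
  ((isLittleO_const_id_atTop u).isBigO.comp_tendsto tendsto_natCast_atTop_atTop).add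
    (isBigO_const_mul_self v _ _)

lemma isBigO_mul_rpow_add_one {f g : ℕ → ℝ} {r : ℝ} (hf : f =O[atTop] fun n : ℕ => (n : ℝ))
    (hg : g =O[atTop] fun n : ℕ => (n : ℝ) ^ r) :
    (fun n => f n * g n) =O[atTop] fun n : ℕ => (n : ℝ) ^ (r + 1) := by
  refine (hf.mul hg).congr' EventuallyEq.rfl ?_
  filter_upwards [eventually_gt_atTop 0] with n hn
  rw [rpow_add_one (by positivity), mul_comm]

lemma summable_veryWellPoisedTerm {a b c d : ℝ} (h : -1 < a - b - c - d) :
    Summable (veryWellPoisedTerm a b c d) := by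
  have hlin : (fun n : ℕ => (a + 2 * n) / a) =O[atTop] fun n : ℕ => (n : ℝ) := by
    simpa only [div_eq_inv_mul] using (add_mul_natCast_isBigO a 2).const_mul_left a⁻¹
  exact summable_of_isBigO_nat (summable_nat_rpow.2 (by linarith))
    (isBigO_mul_rpow_add_one hlin (wellPoisedTerm_isBigO a b c d))

/-! ### The recurrence in `a` -/

/-- The closed form of the very-well-poised `₅F₄(1)` series. -/
noncomputable def dougallValue (a b c d : ℝ) : ℝ :=
  Gamma (a - b + 1) * Gamma (a - c + 1) * Gamma (a - d + 1) * Gamma (a - b - c - d + 1)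
    / (Gamma (a + 1) * Gamma (a - b - c + 1) * Gamma (a - b - d + 1) * Gamma (a - c - d + 1))

/-- The quotient of `dougallValue a b c d` by `dougallValue (a + 1) b c d`, as a rational function
(which is meaningful also where `dougallValue` vanishes). -/
noncomputable def dougallRatio (a b c d : ℝ) : ℝ :=
  (a + 1) * (a - b - c + 1) * (a - b - d + 1) * (a - c - d + 1)
    / ((a - b + 1) * (a - c + 1) * (a - d + 1) * (a - b - c - d + 1))

/-- The certificate, of the kind found by Zeilberger's algorithm, for the recurrence of the series
in `a`: an antidifference in `n` of
`veryWellPoisedTerm a b c d n - dougallRatio a b c d * veryWellPoisedTerm (a + 1) b c d n`. -/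
noncomputable def dougallCert (a b c d : ℝ) (n : ℕ) : ℝ :=
  -(n * ((2 * a - b - c - d + 1 + n) / (a * (a - b - c - d + 1)) * wellPoisedTerm a b c d n))

lemma dougallValue_eq_ratio_mul (a b c d : ℝ) :
    dougallValue a b c d = dougallRatio a b c d * dougallValue (a + 1) b c d := by
  simp only [dougallValue, dougallRatio, add_sub_right_comm]
  rw [Gamma_eq_Gamma_add_one_div (a - b + 1), Gamma_eq_Gamma_add_one_div (a - c + 1),
    Gamma_eq_Gamma_add_one_div (a - d + 1), Gamma_eq_Gamma_add_one_div (a - b - c - d + 1),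
    Gamma_eq_Gamma_add_one_div (a + 1), Gamma_eq_Gamma_add_one_div (a - b - c + 1),
    Gamma_eq_Gamma_add_one_div (a - b - d + 1), Gamma_eq_Gamma_add_one_div (a - c - d + 1)]
  simp only [div_eq_mul_inv, mul_inv, inv_inv]
  ring

lemma tendsto_dougallCert {a b c d : ℝ} (h : -1 < a - b - c - d) :
    Tendsto (dougallCert a b c d) atTop (𝓝 0) := by
  have hlin : (fun n : ℕ => (2 * a - b - c - d + 1 + n) / (a * (a - b - c - d + 1)))
      =O[atTop] fun n : ℕ => (n : ℝ) := by
    simpa only [div_eq_inv_mul, one_mul] using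
      (add_mul_natCast_isBigO (2 * a - b - c - d + 1) 1).const_mul_left (a * (a - b - c - d + 1))⁻¹
  have hO := (isBigO_mul_rpow_add_one (isBigO_refl _ atTop)
    (isBigO_mul_rpow_add_one hlin (wellPoisedTerm_isBigO a b c d))).neg_left
  have hpow : Tendsto (fun n : ℕ => (n : ℝ) ^ (-(2 * (a - b - c - d) + 2))) atTop (𝓝 0) :=
    (tendsto_rpow_neg_atTop (by linarith)).comp tendsto_natCast_atTop_atTop
  refine hO.trans_tendsto ?_
  convert hpow using 3
  ring

section

variable {a b c d : ℝ}

lemma dougallCert_succ_sub (ha : ∀ m : ℕ, a ≠ -m) (hb : ∀ m : ℕ, a - b + 1 ≠ -m)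
    (hc : ∀ m : ℕ, a - c + 1 ≠ -m) (hd : ∀ m : ℕ, a - d + 1 ≠ -m)
    (h : a - b - c - d + 1 ≠ 0) (n : ℕ) :
    dougallCert a b c d (n + 1) - dougallCert a b c d n =
      veryWellPoisedTerm a b c d n
        - dougallRatio a b c d * veryWellPoisedTerm (a + 1) b c d n := by
  have ha₀ : a ≠ 0 := by simpa using ha 0
  have ha₁ : a + 1 ≠ 0 := by simpa using add_natCast_ne_zero ha 1
  have hb₀ : a - b + 1 ≠ 0 := by simpa using hb 0
  have hc₀ : a - c + 1 ≠ 0 := by simpa using hc 0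
  have hd₀ : a - d + 1 ≠ 0 := by simpa using hd 0
  have hbn : a - b + 1 + n ≠ 0 := add_natCast_ne_zero hb n
  have hcn : a - c + 1 + n ≠ 0 := add_natCast_ne_zero hc n
  have hdn : a - d + 1 + n ≠ 0 := add_natCast_ne_zero hd n
  have hn : (n : ℝ) + 1 ≠ 0 := by positivity
  rw [dougallCert, dougallCert, veryWellPoisedTerm, veryWellPoisedTerm, dougallRatio,
    wellPoisedTerm_succ, wellPoisedTerm_add_one ha₀ hb₀ hc₀ hd₀, Nat.cast_succ]
  generalize wellPoisedTerm a b c d n = w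
  field_simp
  ring

lemma tsum_veryWellPoisedTerm_eq_ratio_mul (ha : ∀ m : ℕ, a ≠ -m)
    (hb : ∀ m : ℕ, a - b + 1 ≠ -m) (hc : ∀ m : ℕ, a - c + 1 ≠ -m)
    (hd : ∀ m : ℕ, a - d + 1 ≠ -m) (h : -1 < a - b - c - d) :
    ∑' n, veryWellPoisedTerm a b c d n =
      dougallRatio a b c d * ∑' n, veryWellPoisedTerm (a + 1) b c d n := by
  have hsum := (summable_veryWellPoisedTerm h).hasSum
  have hsum' := (summable_veryWellPoisedTerm (a := a + 1) (b := b) (c := c) (d := d)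
    (by linarith)).hasSum.mul_left
    (dougallRatio a b c d)
  have hzero : Tendsto (fun N => ∑ n ∈ Finset.range N, (veryWellPoisedTerm a b c d n
      - dougallRatio a b c d * veryWellPoisedTerm (a + 1) b c d n)) atTop (𝓝 0) := by
    refine (tendsto_dougallCert h).congr fun N => ?_
    simp only [← dougallCert_succ_sub ha hb hc hd (by linarith : 0 < a - b - c - d + 1).ne']
    rw [Finset.sum_range_sub]
    simp [dougallCert]
  exact sub_eq_zero.1 (tendsto_nhds_unique (hsum.sub hsum').tendsto_sum_nat hzero)

lemma tsum_veryWellPoisedTerm_mul_value (ha : ∀ m : ℕ, a ≠ -m) (hb : ∀ m : ℕ, a - b + 1 ≠ -m)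
    (hc : ∀ m : ℕ, a - c + 1 ≠ -m) (hd : ∀ m : ℕ, a - d + 1 ≠ -m) (h : -1 < a - b - c - d)
    (N : ℕ) :
    (∑' n, veryWellPoisedTerm a b c d n) * dougallValue (a + N) b c d =
      dougallValue a b c d * ∑' n, veryWellPoisedTerm (a + N) b c d n := by
  induction N generalizing a with
  | zero => simp [mul_comm]
  | succ N ih =>
    have hshift := ih (a := a + 1) (fun m hm => ha (m + 1) (by push_cast; linarith))
      (fun m hm => hb (m + 1) (by push_cast; linarith))
      (fun m hm => hc (m + 1) (by push_cast; linarith))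
      (fun m hm => hd (m + 1) (by push_cast; linarith)) (by linarith)
    rw [tsum_veryWellPoisedTerm_eq_ratio_mul ha hb hc hd h, dougallValue_eq_ratio_mul a b c d,
      Nat.cast_succ, add_comm (N : ℝ) 1, ← add_assoc, mul_assoc, mul_assoc, hshift]

end

/-! ### The limit of large `a` -/

lemma tendsto_add_div_add_atTop (u v : ℝ) :
    Tendsto (fun x : ℝ => (x + u) / (x + v)) atTop (𝓝 1) := by
  have hlim : Tendsto (fun x : ℝ => 1 + (u - v) / (x + v)) atTop (𝓝 1) := by
    simpa using ((tendsto_atTop_add_const_right _ v tendsto_id).const_div_atTop (u - v)).const_add 1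
  refine hlim.congr' ?_
  filter_upwards [eventually_gt_atTop (-v)] with x hx
  have : x + v ≠ 0 := by linarith
  field_simp
  ring

lemma tendsto_wellPoisedTerm_atTop (b c d : ℝ) (n : ℕ) :
    Tendsto (fun a => wellPoisedTerm a b c d n) atTop (𝓝 (if n = 0 then 1 else 0)) := by
  induction n with
  | zero => simp [wellPoisedTerm_zero]
  | succ n ih =>
    have hinv (x y : ℝ) : Tendsto (fun a => y / (a + (1 - x + n))) atTop (𝓝 0) :=
      (tendsto_atTop_add_const_right _ _ tendsto_id).const_div_atTop y
    have hratio := ((tendsto_add_div_add_atTop n (1 - b + n)).mul (hinv c (b + n))).mul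
      (hinv d ((c + n) * (d + n) / (n + 1)))
    have hlim := ih.mul hratio
    simp only [mul_zero] at hlim
    refine hlim.congr fun a => ?_
    rw [wellPoisedTerm_succ]
    simp only [show ∀ x : ℝ, a - x + 1 + n = a + (1 - x + n) from fun x => by ring,
      div_eq_mul_inv, mul_inv]
    ring

lemma tendsto_veryWellPoisedTerm_atTop (b c d : ℝ) (n : ℕ) :
    Tendsto (fun a => veryWellPoisedTerm a b c d n) atTop (𝓝 (if n = 0 then 1 else 0)) := by
  simpa [veryWellPoisedTerm] using
    (tendsto_add_div_add_atTop (2 * n) 0).mul (tendsto_wellPoisedTerm_atTop b c d n)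

lemma abs_wellPoisedTerm_le {a x b c d : ℝ} (hb : |b| < a) (hc : |c| < a) (hd : |d| < a)
    (hx : a ≤ x) (n : ℕ) :
    |wellPoisedTerm x b c d n| ≤ wellPoisedTerm a (|b| + 1) (|c| + 1) (|d| + 1) n := by
  have ha : 0 < poch a n := poch_pos ((abs_nonneg b).trans_lt hb) n
  have hx₀ : 0 < poch x n := poch_pos ((abs_nonneg b).trans_lt (hb.trans_le hx)) n
  have hden {y : ℝ} (hy : |y| < a) : 0 < poch (x - y + 1) n :=
    poch_pos (by linarith [le_abs_self y]) n
  have hden' {y : ℝ} (hy : |y| < a) : 0 < poch (a - |y|) n := poch_pos (sub_pos.2 hy) n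
  have hnum (y : ℝ) : 0 < poch (|y| + 1) n := poch_pos (by positivity) n
  calc |wellPoisedTerm x b c d n|
      = poch x n / poch (x - b + 1) n * |poch b n| * (|poch c n| / poch (x - c + 1) n)
          * (|poch d n| / poch (x - d + 1) n) / n.factorial := by
        simp only [wellPoisedTerm, div_eq_mul_inv, mul_inv, abs_mul, abs_inv,
          abs_of_pos (hden hb), abs_of_pos (hden hc), abs_of_pos (hden hd), abs_of_pos hx₀,
          Nat.abs_cast]
        ring
    _ ≤ poch a n / poch (a - |b|) n * poch (|b| + 1) n * (poch (|c| + 1) n / poch (a - |c|) n)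
          * (poch (|d| + 1) n / poch (a - |d|) n) / n.factorial := by
        have := hden hc
        have := hden hd
        have := hden' hb
        have := hden' hc
        have := hnum b
        have := hnum c
        gcongr ?_ * ?_ * ?_ * ?_ / _
        · exact poch_div_poch_sub_add_one_le hb hx n
        · exact abs_poch_le_poch_abs_add_one b n
        · exact abs_poch_div_poch_sub_add_one_le hc hx n
        · exact abs_poch_div_poch_sub_add_one_le hd hx n
    _ = wellPoisedTerm a (|b| + 1) (|c| + 1) (|d| + 1) n := by
        simp only [wellPoisedTerm, sub_add_eq_sub_sub, sub_add_cancel, div_eq_mul_inv, mul_inv]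
        ring

lemma abs_veryWellPoisedTerm_le {a x b c d : ℝ} (hb : |b| < a) (hc : |c| < a) (hd : |d| < a)
    (hx : a ≤ x) (n : ℕ) :
    |veryWellPoisedTerm x b c d n| ≤ veryWellPoisedTerm a (|b| + 1) (|c| + 1) (|d| + 1) n := by
  have ha : 0 < a := (abs_nonneg b).trans_lt hb
  have hx₀ : 0 < x := ha.trans_le hx
  rw [veryWellPoisedTerm, veryWellPoisedTerm, abs_mul, abs_of_nonneg (by positivity)]
  refine mul_le_mul ?_ (abs_wellPoisedTerm_le hb hc hd hx n) (abs_nonneg _) (by positivity)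
  rw [div_le_div_iff₀ hx₀ ha]
  linarith [mul_le_mul_of_nonneg_left hx (Nat.cast_nonneg (α := ℝ) n)]

lemma tendsto_tsum_veryWellPoisedTerm_atTop (b c d : ℝ) :
    Tendsto (fun a => ∑' n, veryWellPoisedTerm a b c d n) atTop (𝓝 1) := by
  obtain ⟨A, hA⟩ := exists_gt (|b| + |c| + |d| + 2)
  have hb := abs_nonneg b
  have hc := abs_nonneg c
  have hd := abs_nonneg d
  have hsum : Summable (veryWellPoisedTerm A (|b| + 1) (|c| + 1) (|d| + 1)) :=
    summable_veryWellPoisedTerm (by linarith)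
  have hbound : ∀ᶠ a in atTop, ∀ n, ‖veryWellPoisedTerm a b c d n‖ ≤
      veryWellPoisedTerm A (|b| + 1) (|c| + 1) (|d| + 1) n := by
    filter_upwards [eventually_ge_atTop A] with a ha n
    exact abs_veryWellPoisedTerm_le (by linarith) (by linarith) (by linarith) ha n
  simpa using tendsto_tsum_of_dominated_convergence hsum
    (tendsto_veryWellPoisedTerm_atTop b c d) hbound

lemma tendsto_dougallValue_add_natCast (a b c d : ℝ) :
    Tendsto (fun N : ℕ => dougallValue (a + N) b c d) atTop (𝓝 1) := by
  have hΓ := Gamma_add_natCast_isEquivalent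
  have hnum := (((hΓ (a - b + 1)).mul (hΓ (a - c + 1))).mul (hΓ (a - d + 1))).mul
    (hΓ (a - b - c - d + 1))
  have hden := (((hΓ (a + 1)).mul (hΓ (a - b - c + 1))).mul (hΓ (a - b - d + 1))).mul
    (hΓ (a - c - d + 1))
  refine (((hnum.div hden).congr_left (Eventually.of_forall fun N => ?_)).congr_right
    ?_).tendsto_const
  · simp only [Pi.mul_apply, Pi.div_apply, dougallValue, add_sub_right_comm,
      add_right_comm _ _ (1 : ℝ)]
  filter_upwards [eventually_gt_atTop 0] with N hN
  have hN' : (0 : ℝ) < N := by positivity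
  have hpow : (N : ℝ) ^ (a - b + 1 - 1) * (N : ℝ) ^ (a - c + 1 - 1) * (N : ℝ) ^ (a - d + 1 - 1)
      * (N : ℝ) ^ (a - b - c - d + 1 - 1) = (N : ℝ) ^ (a + 1 - 1) * (N : ℝ) ^ (a - b - c + 1 - 1)
      * (N : ℝ) ^ (a - b - d + 1 - 1) * (N : ℝ) ^ (a - c - d + 1 - 1) := by
    simp only [← rpow_add hN']
    congr 1
    ring
  simp only [Pi.mul_apply, Pi.div_apply, Function.const_apply]
  rw [div_eq_one_iff_eq (by positivity)]
  linear_combination (N.factorial : ℝ) ^ 4 * hpow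

theorem dougall_5F4_one_general (a b c d : ℝ) (ha : ∀ m : ℕ, a ≠ -m)
    (hb : ∀ m : ℕ, a - b + 1 ≠ -m) (hc : ∀ m : ℕ, a - c + 1 ≠ -m)
    (hd : ∀ m : ℕ, a - d + 1 ≠ -m) (habcd : -1 < a - b - c - d) :
    HasSum (fun n : ℕ =>
        poch (a/2 + 1) n * poch a n * poch b n * poch c n * poch d n
          / (poch (a/2) n * poch (a - b + 1) n * poch (a - c + 1) n * poch (a - d + 1) n
              * (Nat.factorial n)))
      (Real.Gamma (a - b + 1) * Real.Gamma (a - c + 1) * Real.Gamma (a - d + 1)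
          * Real.Gamma (a - b - c - d + 1)
        / (Real.Gamma (a + 1) * Real.Gamma (a - b - c + 1) * Real.Gamma (a - b - d + 1)
            * Real.Gamma (a - c - d + 1))) := by
  simp only [← veryWellPoisedTerm_eq_poch ha]
  refine (summable_veryWellPoisedTerm habcd).hasSum_iff.2 ?_
  have hsum := (tendsto_tsum_veryWellPoisedTerm_atTop b c d).comp
    (tendsto_atTop_add_const_left _ a tendsto_natCast_atTop_atTop)
  have hvalue := tendsto_dougallValue_add_natCast a b c d
  have hlim := (hvalue.const_mul _).congr (tsum_veryWellPoisedTerm_mul_value ha hb hc hd habcd)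
  simpa [dougallValue] using tendsto_nhds_unique hlim (hsum.const_mul _)

theorem dougall_5F4_one (a b c d : ℝ) (ha : 0 < a) (hb : 0 < b) (hc : 0 < c) (hd : 0 < d)
    (habcd : 0 < a - b - c - d) :
    ∑' n : ℕ,
        poch (a/2 + 1) n * poch a n * poch b n * poch c n * poch d n
          / (poch (a/2) n * poch (a - b + 1) n * poch (a - c + 1) n * poch (a - d + 1) n
              * (Nat.factorial n)) =
      Real.Gamma (a - b + 1) * Real.Gamma (a - c + 1) * Real.Gamma (a - d + 1)
          * Real.Gamma (a - b - c - d + 1)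
        / (Real.Gamma (a + 1) * Real.Gamma (a - b - c + 1) * Real.Gamma (a - b - d + 1)
            * Real.Gamma (a - c - d + 1)) := by
  have hb' : 0 < a - b + 1 := by linarith
  have hc' : 0 < a - c + 1 := by linarith
  have hd' : 0 < a - d + 1 := by linarith
  exact (dougall_5F4_one_general a b c d (ne_neg_natCast_of_pos ha) (ne_neg_natCast_of_pos hb')
    (ne_neg_natCast_of_pos hc') (ne_neg_natCast_of_pos hd') (by linarith)).tsum_eq
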